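/- arXiv:1606.04665 — 2 statements merged into one kernel-verified Lean document; each statement's English description precedes it below -/
import Mathlib

section
/- Second-order (convexity) energy inequality for the truncated Preisach operator in the simplest case of a single play: if ρ_R(r,·) ≡ a is constant in v with a > 0, then for every 2π-periodic p ∈ W^{2,1}_per one has −∫_{2π}^{4π} G_R[p]_t(t) p_tt(t) dt ≥ 0. -/
open MeasureTheory Set

/-- `IsPlayLoc r p ξ ξ'` : `ξ` (locally `W^{1,1}` on `[0,∞)`, with a.e. derivative `ξ'`)
solves the play variational inequality with input `p` and memory parameter `r` on `[0,∞)`. -/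
def IsPlayLoc (r : ℝ) (p ξ ξ' : ℝ → ℝ) : Prop :=
  (∀ T > (0:ℝ), IntervalIntegrable ξ' volume 0 T) ∧
  (∀ t ∈ Set.Ici (0:ℝ), ξ t = ξ 0 + ∫ s in (0:ℝ)..t, ξ' s) ∧
  (∀ t ∈ Set.Ici (0:ℝ), |p t - ξ t| ≤ r) ∧
  (∀ᵐ t ∂(volume.restrict (Set.Ici (0:ℝ))),
      ∀ z ∈ Set.Icc (-r) r, 0 ≤ ξ' t * (p t - ξ t - z)) ∧
  p 0 - ξ 0 = max (-r) (min (p 0) r)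

section

open Filter Topology

/-- `f` is an antiderivative on `[0,∞)` of the locally integrable function `f'`. -/
def IsPrimitive (f f' : ℝ → ℝ) : Prop :=
  (∀ T > (0:ℝ), IntervalIntegrable f' volume 0 T) ∧
  ∀ t ∈ Ici (0:ℝ), f t = f 0 + ∫ s in (0:ℝ)..t, f' s

namespace IsPrimitive

variable {f f' g g' : ℝ → ℝ} {a b : ℝ}

theorem intervalIntegrable (hf : IsPrimitive f f') (ha : 0 ≤ a) (hb : 0 ≤ b) :
    IntervalIntegrable f' volume a b := by
  have key : ∀ c : ℝ, 0 ≤ c → IntervalIntegrable f' volume 0 c := by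
    intro c hc
    rcases hc.eq_or_lt with rfl | hc
    · exact IntervalIntegrable.refl
    · exact hf.1 c hc
  exact (key a ha).symm.trans (key b hb)

theorem sub_eq (hf : IsPrimitive f f') (ha : 0 ≤ a) (hb : 0 ≤ b) :
    f b - f a = ∫ s in a..b, f' s := by
  rw [hf.2 b hb, hf.2 a ha,
    ← intervalIntegral.integral_interval_sub_left (hf.intervalIntegrable le_rfl hb)
      (hf.intervalIntegrable le_rfl ha)]
  ring

theorem absolutelyContinuousOnInterval (hf : IsPrimitive f f') (ha : 0 ≤ a) (hb : 0 ≤ b) :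
    AbsolutelyContinuousOnInterval f a b := by
  have hI := (hf.intervalIntegrable ha hb).absolutelyContinuousOnInterval_intervalIntegral
    (c := a) left_mem_uIcc
  rw [absolutelyContinuousOnInterval_iff] at hI ⊢
  intro ε hε
  obtain ⟨δ, hδ, h⟩ := hI ε hε
  refine ⟨δ, hδ, fun E hE hl => ?_⟩
  refine lt_of_eq_of_lt (Finset.sum_congr rfl fun i hi => ?_) (h E hE hl)
  have h0 : ∀ x ∈ uIcc a b, f x = f a + ∫ s in a..x, f' s := fun x hx => by
    rw [← hf.sub_eq ha ((le_inf ha hb).trans hx.1)]; ring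
  rw [h0 _ (hE.1 i hi).1, h0 _ (hE.1 i hi).2, dist_add_left]

theorem continuousOn (hf : IsPrimitive f f') : ContinuousOn f (Ici 0) := by
  intro t ht
  have h0 : (0:ℝ) ≤ t + 1 := add_nonneg ht zero_le_one
  have h := (hf.absolutelyContinuousOnInterval le_rfl h0).continuousOn
  rw [uIcc_of_le h0] at h
  have ht' : t ∈ Icc 0 (t + 1) := ⟨ht, by linarith⟩
  refine (h t ht').mono_of_mem_nhdsWithin ?_
  rw [← Ici_inter_Iic]
  exact inter_mem_nhdsWithin _ (Iic_mem_nhds (by linarith))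

theorem hasDerivAt_of_integral (hf : IsPrimitive f f') {t : ℝ} (ht : 0 < t)
    (h : HasDerivAt (fun x => ∫ s in (0:ℝ)..x, f' s) (f' t) t) : HasDerivAt f (f' t) t := by
  refine (h.const_add (f 0)).congr_of_eventuallyEq ?_
  filter_upwards [Ioi_mem_nhds ht] with x hx using hf.2 x (mem_Ici.2 (le_of_lt hx))

theorem ae_hasDerivAt (hf : IsPrimitive f f') : ∀ᵐ t, 0 < t → HasDerivAt f (f' t) t := by
  have h : ∀ n : ℕ, ∀ᵐ t, t ∈ uIcc (0:ℝ) n → ∀ c ∈ uIcc (0:ℝ) n,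
      HasDerivAt (fun x => ∫ s in c..x, f' s) (f' t) t := fun n =>
    (hf.intervalIntegrable le_rfl n.cast_nonneg).ae_hasDerivAt_integral
  filter_upwards [ae_all_iff.2 h] with t ht h0
  obtain ⟨n, hn⟩ := exists_nat_ge t
  refine hf.hasDerivAt_of_integral h0 (ht n ?_ 0 left_mem_uIcc)
  rw [uIcc_of_le n.cast_nonneg]
  exact ⟨h0.le, hn⟩

theorem hasDerivAt (hf : IsPrimitive f f') (hc : ContinuousOn f' (Ici 0)) {t : ℝ} (ht : 0 < t) :
    HasDerivAt f (f' t) t :=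
  hf.hasDerivAt_of_integral ht <|
    intervalIntegral.integral_hasDerivAt_right (hf.intervalIntegrable le_rfl ht.le)
      ((hc.mono Ioi_subset_Ici_self).stronglyMeasurableAtFilter isOpen_Ioi t ht)
      (hc.continuousAt (Ici_mem_nhds ht))

theorem sub (hf : IsPrimitive f f') (hg : IsPrimitive g g') :
    IsPrimitive (fun t => f t - g t) (fun t => f' t - g' t) := by
  refine ⟨fun T hT => (hf.1 T hT).sub (hg.1 T hT), fun t ht => ?_⟩
  beta_reduce
  rw [intervalIntegral.integral_sub (hf.intervalIntegrable le_rfl ht) (hg.intervalIntegrable le_rfl ht),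
    hf.2 t ht, hg.2 t ht]
  ring

theorem neg (hf : IsPrimitive f f') : IsPrimitive (fun t => -f t) (fun t => -f' t) := by
  refine ⟨fun T hT => (hf.1 T hT).neg, fun t ht => ?_⟩
  beta_reduce
  rw [intervalIntegral.integral_neg, hf.2 t ht]
  ring

theorem comp_add_right (hf : IsPrimitive f f') {h : ℝ} (hh : 0 ≤ h) :
    IsPrimitive (fun t => f (t + h)) (fun t => f' (t + h)) := by
  refine ⟨fun T hT => ?_, fun t ht => ?_⟩
  · have := (hf.intervalIntegrable (b := T + h) hh (by linarith)).comp_add_right h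
    simpa using this
  · have ht : (0:ℝ) ≤ t := ht
    rw [intervalIntegral.integral_comp_add_right, ← hf.sub_eq (by linarith) (by linarith)]
    ring

/-- The increment `t ↦ f (t + h) - f t` of an antiderivative. -/
theorem increment (hf : IsPrimitive f f') {h : ℝ} (hh : 0 ≤ h) :
    IsPrimitive (fun t => f (t + h) - f t) (fun t => f' (t + h) - f' t) :=
  (hf.comp_add_right hh).sub hf

theorem integral_self (hf : ∀ T > (0:ℝ), IntervalIntegrable f' volume 0 T) :
    IsPrimitive (fun t => ∫ s in (0:ℝ)..t, f' s) f' :=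
  ⟨hf, fun t _ => by simp⟩

theorem of_continuousOn (hf : ContinuousOn f' (Ici 0)) :
    IsPrimitive (fun t => ∫ s in (0:ℝ)..t, f' s) f' :=
  integral_self fun T hT => (hf.mono (by
    rw [uIcc_of_le hT.le]; exact Icc_subset_Ici_self)).intervalIntegrable

/-- A function which does not increase above the level `c` stays below `c`. -/
theorem le_of_ae_nonpos (hf : IsPrimitive f f') {s T c : ℝ} (hs : 0 ≤ s) (hc : f s ≤ c)
    (h : ∀ᵐ t, t ∈ Ioc s T → c < f t → f' t ≤ 0) {t : ℝ} (ht : t ∈ Icc s T) : f t ≤ c := by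
  by_contra! hlt
  have hcont : ContinuousOn f (Icc s t) :=
    hf.continuousOn.mono fun u hu => hs.trans hu.1
  have hcomp : IsCompact (Icc s t ∩ f ⁻¹' Iic c) :=
    isCompact_Icc.of_isClosed_subset (hcont.preimage_isClosed_of_isClosed isClosed_Icc isClosed_Iic)
      inter_subset_left
  obtain ⟨u, ⟨hu, huc⟩, hmax⟩ := hcomp.exists_isGreatest ⟨s, ⟨le_rfl, ht.1⟩, hc⟩
  have huc : f u ≤ c := huc
  have hsub := hf.sub_eq (hs.trans hu.1) (hs.trans ht.1)
  rw [intervalIntegral.integral_of_le hu.2] at hsub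
  have : ∫ x in Ioc u t, f' x ≤ 0 := by
    refine setIntegral_nonpos_ae measurableSet_Ioc ?_
    filter_upwards [h] with x hx hxm
    refine hx ⟨hu.1.trans_lt hxm.1, hxm.2.trans ht.2⟩ ?_
    by_contra! hle
    exact absurd (hmax ⟨⟨hu.1.trans hxm.1.le, hxm.2⟩, hle⟩) (not_le.2 hxm.1)
  linarith

/-- If `f' (g - f) ≥ 0` and both functions take equal values at the end points,
then `∫ f g' ≤ 0`. -/
theorem integral_mul_nonpos (hf : IsPrimitive f f') (hg : IsPrimitive g g')
    (h : ∀ᵐ t, 0 < t → 0 ≤ f' t * (g t - f t)) (ha : 0 ≤ a) (hab : a ≤ b)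
    (hfab : f b = f a) (hgab : g b = g a) : ∫ t in a..b, f t * g' t ≤ 0 := by
  have hb := ha.trans hab
  have hfac := hf.absolutelyContinuousOnInterval ha hb
  have hgac := hg.absolutelyContinuousOnInterval ha hb
  have hac := hfac.mul (hgac.sub (hfac.const_mul (1 / 2)))
  have h_int := hac.integral_deriv_eq_sub
  have hzero : (∫ t in a..b, deriv (f * (g - fun x => 1 / 2 * f x)) t) = 0 := by
    rw [h_int]; simp [hfab, hgab]
  rw [← hzero]
  refine intervalIntegral.integral_mono_ae_restrict hab
    ((hg.intervalIntegrable ha hb).continuousOn_mul hfac.continuousOn)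
    hac.intervalIntegrable_deriv ?_
  have hpos : ∀ᵐ t, t ∈ Icc a b → 0 < t := by
    filter_upwards [compl_mem_ae_iff.2 (measure_singleton (μ := volume) a)] with t hta htm
    exact ha.trans_lt (lt_of_le_of_ne htm.1 (Ne.symm hta))
  refine (ae_restrict_iff' measurableSet_Icc).2 ?_
  filter_upwards [h, hf.ae_hasDerivAt, hg.ae_hasDerivAt, hpos] with t h1 h2 h3 h4 htm
  have ht := h4 htm
  have hd := (h2 ht).mul ((h3 ht).sub ((h2 ht).const_mul (1 / 2)))
  have := h1 ht
  rw [hd.deriv]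
  simp only [Pi.sub_apply]
  nlinarith

end IsPrimitive

namespace IsPlayLoc

variable {r s : ℝ} {p ξ ξ' η η' : ℝ → ℝ}

theorem isPrimitive (hξ : IsPlayLoc r p ξ ξ') : IsPrimitive ξ ξ' := ⟨hξ.1, hξ.2.1⟩

theorem abs_sub_le (hξ : IsPlayLoc r p ξ ξ') {t : ℝ} (ht : 0 ≤ t) : |p t - ξ t| ≤ r :=
  hξ.2.2.1 t ht

theorem ae_variational (hξ : IsPlayLoc r p ξ ξ') :
    ∀ᵐ t, 0 ≤ t → ∀ z ∈ Icc (-r) r, 0 ≤ ξ' t * (p t - ξ t - z) :=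
  (ae_restrict_iff' measurableSet_Ici).1 hξ.2.2.2.1

theorem ae_nonpos (hξ : IsPlayLoc r p ξ ξ') (hr : 0 ≤ r) :
    ∀ᵐ t, 0 ≤ t → p t - ξ t < r → ξ' t ≤ 0 := by
  filter_upwards [hξ.ae_variational] with t ht h0 hlt
  nlinarith [ht h0 r ⟨by linarith, le_rfl⟩]

theorem ae_nonneg (hξ : IsPlayLoc r p ξ ξ') (hr : 0 ≤ r) :
    ∀ᵐ t, 0 ≤ t → -r < p t - ξ t → 0 ≤ ξ' t := by
  filter_upwards [hξ.ae_variational] with t ht h0 hlt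
  nlinarith [ht h0 (-r) ⟨le_rfl, by linarith⟩]

theorem neg (hξ : IsPlayLoc r p ξ ξ') (hr : 0 ≤ r) :
    IsPlayLoc r (fun t => -p t) (fun t => -ξ t) (fun t => -ξ' t) := by
  refine ⟨hξ.isPrimitive.neg.1, hξ.isPrimitive.neg.2, fun t ht => ?_, ?_, ?_⟩
  · rw [← abs_neg]
    convert hξ.abs_sub_le ht using 2
    ring
  · filter_upwards [hξ.2.2.2.1] with t ht z hz
    convert ht (-z) ⟨neg_le_neg hz.2, neg_le.1 hz.1⟩ using 1
    ring
  · have h0 := hξ.2.2.2.2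
    have : -p 0 - -ξ 0 = -(p 0 - ξ 0) := by ring
    rw [this, h0]
    rcases max_cases (-r) (min (p 0) r) with h | h <;> rcases min_cases (p 0) r with h' | h' <;>
    rcases max_cases (-r) (min (-p 0) r) with k | k <;>
    rcases min_cases (-p 0) r with k' | k' <;> linarith

theorem abs_zero_le (hξ : IsPlayLoc r p ξ ξ') (hr : 0 ≤ r) : |ξ 0| ≤ |p 0| := by
  have h0 : ξ 0 = p 0 - max (-r) (min (p 0) r) := by rw [← hξ.2.2.2.2]; ring
  rw [h0]
  rcases max_cases (-r) (min (p 0) r) with h | h <;> rcases min_cases (p 0) r with h' | h' <;>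
  rcases abs_cases (p 0) with k | k <;> rw [abs_le] <;> constructor <;> linarith

/-- The play operator is nonexpansive in its memory parameter. -/
theorem sub_le_abs_sub (hξ : IsPlayLoc r p ξ ξ') (hη : IsPlayLoc s p η η') (hr : 0 ≤ r)
    (hs : 0 ≤ s) {t : ℝ} (ht : 0 ≤ t) : ξ t - η t ≤ |r - s| := by
  refine (hξ.isPrimitive.sub hη.isPrimitive).le_of_ae_nonpos (s := 0) (T := t) le_rfl ?_ ?_
    ⟨ht, le_rfl⟩
  · have h1 := hξ.2.2.2.2
    have h2 := hη.2.2.2.2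
    have h3 : ξ 0 - η 0 = max (-s) (min (p 0) s) - max (-r) (min (p 0) r) := by
      rw [← h1, ← h2]; ring
    rw [h3]
    rcases max_cases (-r) (min (p 0) r) with h | h <;> rcases min_cases (p 0) r with h' | h' <;>
    rcases max_cases (-s) (min (p 0) s) with k | k <;>
    rcases min_cases (p 0) s with k' | k' <;>
    rcases abs_cases (r - s) with l | l <;> linarith
  · filter_upwards [hξ.ae_nonpos hr, hη.ae_nonneg hs] with u h1 h2 hu hlt
    have hξu := abs_le.1 (hξ.abs_sub_le hu.1.le)
    have hηu := abs_le.1 (hη.abs_sub_le hu.1.le)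
    have := h1 hu.1.le (by linarith [neg_abs_le (r - s)])
    have := h2 hu.1.le (by linarith [le_abs_self (r - s)])
    linarith

theorem abs_sub_le_abs_sub (hξ : IsPlayLoc r p ξ ξ') (hη : IsPlayLoc s p η η') (hr : 0 ≤ r)
    (hs : 0 ≤ s) {t : ℝ} (ht : 0 ≤ t) : |ξ t - η t| ≤ |r - s| := by
  refine abs_le.2 ⟨?_, hξ.sub_le_abs_sub hη hr hs ht⟩
  have := hη.sub_le_abs_sub hξ hs hr ht
  rw [abs_sub_comm] at this
  linarith

theorem sub_le_mul (hξ : IsPlayLoc r p ξ ξ') (hr : 0 ≤ r) {L T : ℝ}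
    (hp : ∀ u ∈ Icc 0 T, ∀ v ∈ Icc 0 T, |p v - p u| ≤ L * |v - u|) (hL : 0 ≤ L)
    {u v : ℝ} (hu : 0 ≤ u) (huv : u ≤ v) (hv : v ≤ T) : ξ v - ξ u ≤ L * (v - u) := by
  have hLuv := mul_nonneg hL (sub_nonneg.2 huv)
  have : ξ v ≤ ξ u + L * (v - u) := by
    refine hξ.isPrimitive.le_of_ae_nonpos hu (by linarith) ?_ ⟨huv, le_rfl⟩
    filter_upwards [hξ.ae_nonpos hr] with t h1 ht hlt
    have h0 : 0 ≤ t := hu.trans ht.1.le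
    refine h1 h0 ?_
    have h2 := (abs_le.1 (hξ.abs_sub_le hu)).2
    have h3 := (le_abs_self _).trans (hp u ⟨hu, huv.trans hv⟩ t ⟨h0, ht.2.trans hv⟩)
    rw [abs_of_pos (sub_pos.2 ht.1)] at h3
    have h4 : L * (t - u) ≤ L * (v - u) :=
      mul_le_mul_of_nonneg_left (by linarith [ht.2]) hL
    linarith
  linarith

/-- The play operator does not increase Lipschitz constants. -/
theorem abs_sub_le_mul (hξ : IsPlayLoc r p ξ ξ') (hr : 0 ≤ r) {L T : ℝ}
    (hp : ∀ u ∈ Icc 0 T, ∀ v ∈ Icc 0 T, |p v - p u| ≤ L * |v - u|) (hL : 0 ≤ L)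
    {u v : ℝ} (hu : 0 ≤ u) (huv : u ≤ v) (hv : v ≤ T) : |ξ v - ξ u| ≤ L * (v - u) := by
  refine abs_le.2 ⟨?_, hξ.sub_le_mul hr hp hL hu huv hv⟩
  have := (hξ.neg hr).sub_le_mul hr (L := L) (T := T) (fun x hx y hy => by
    rw [← abs_neg]
    convert hp x hx y hy using 2
    ring) hL hu huv hv
  linarith

/-- Monotonicity of the play operator with respect to time increments, integrated over a
period. -/
theorem integral_increment_mul_nonpos (hξ : IsPlayLoc r p ξ ξ') {p' : ℝ → ℝ}
    (hp : IsPrimitive p p') {a b h : ℝ} (hh : 0 ≤ h) (ha : 0 ≤ a) (hab : a ≤ b)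
    (hξab : ξ b = ξ a) (hξabh : ξ (b + h) = ξ (a + h)) (hpab : p b = p a)
    (hpabh : p (b + h) = p (a + h)) :
    ∫ t in a..b, (ξ (t + h) - ξ t) * (p' (t + h) - p' t) ≤ 0 := by
  refine (hξ.isPrimitive.increment hh).integral_mul_nonpos (hp.increment hh) ?_ ha hab
    (by simp only [hξab, hξabh]) (by simp only [hpab, hpabh])
  have hshift : ∀ᵐ t, 0 ≤ t + h → ∀ z ∈ Icc (-r) r,
      0 ≤ ξ' (t + h) * (p (t + h) - ξ (t + h) - z) :=
    (measurePreserving_add_right volume h).quasiMeasurePreserving.ae hξ.ae_variational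
  filter_upwards [hξ.ae_variational, hshift] with t h1 h2 ht
  have hth : 0 ≤ t + h := by linarith
  have k1 := h1 ht.le _ (abs_le.1 (hξ.abs_sub_le hth))
  have k2 := h2 hth _ (abs_le.1 (hξ.abs_sub_le ht.le))
  nlinarith

end IsPlayLoc

/-- A consequence of Fatou's lemma with converging minorants. -/
theorem integral_nonpos_of_tendsto_of_neg_le {α : Type*} [MeasurableSpace α] {μ : Measure α}
    {u g : ℕ → α → ℝ} {v w : α → ℝ} (hu : ∀ n, Integrable (u n) μ)
    (hg : ∀ n, Integrable (g n) μ) (hv : Integrable v μ) (hw : Integrable w μ)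
    (huv : ∀ᵐ x ∂μ, Tendsto (fun n => u n x) atTop (𝓝 (v x)))
    (hgw : ∀ᵐ x ∂μ, Tendsto (fun n => g n x) atTop (𝓝 (w x)))
    (hle : ∀ n, ∀ᵐ x ∂μ, -g n x ≤ u n x) (h_int : ∀ n, ∫ x, u n x ∂μ ≤ 0)
    (hlim : Tendsto (fun n => ∫ x, g n x ∂μ) atTop (𝓝 (∫ x, w x ∂μ))) :
    ∫ x, v x ∂μ ≤ 0 := by
  have hnonneg : 0 ≤ᵐ[μ] fun x => w x + v x := by
    filter_upwards [huv, hgw, ae_all_iff.2 hle] with x h1 h2 h3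
    exact ge_of_tendsto' (h2.add h1) fun n => by
      have : 0 ≤ g n x + u n x := by linarith [h3 n]
      exact this
  have hlow : ∀ n, 0 ≤ᵐ[μ] fun x => g n x + u n x := fun n => by
    filter_upwards [hle n] with x hx
    have : 0 ≤ g n x + u n x := by linarith
    exact this
  have hfatou := lintegral_liminf_le' (μ := μ) (u := atTop)
    (f := fun n x => ENNReal.ofReal (g n x + u n x))
    (fun n => ((hg n).add (hu n)).aestronglyMeasurable.aemeasurable.ennreal_ofReal)
  have hleft : ∫⁻ x, liminf (fun n => ENNReal.ofReal (g n x + u n x)) atTop ∂μ =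
      ENNReal.ofReal (∫ x, w x + v x ∂μ) := by
    rw [ofReal_integral_eq_lintegral_ofReal (f := fun x => w x + v x) (hw.add hv) hnonneg]
    refine lintegral_congr_ae ?_
    filter_upwards [huv, hgw] with x h1 h2
    exact (ENNReal.tendsto_ofReal (h2.add h1)).liminf_eq
  have hright : liminf (fun n => ∫⁻ x, ENNReal.ofReal (g n x + u n x) ∂μ) atTop ≤
      ENNReal.ofReal (∫ x, w x ∂μ) := by
    rw [← (ENNReal.tendsto_ofReal hlim).liminf_eq]
    refine liminf_le_liminf (Eventually.of_forall fun n => ?_)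
    have := ofReal_integral_eq_lintegral_ofReal ((hg n).add (hu n)) (hlow n)
    simp only [Pi.add_apply] at this
    rw [← this, integral_add (hg n) (hu n)]
    exact ENNReal.ofReal_le_ofReal (by linarith [h_int n])
  rw [hleft] at hfatou
  have hw0 : 0 ≤ ∫ x, w x ∂μ := by
    by_contra! hneg
    obtain ⟨n, hn⟩ := (hlim.eventually (gt_mem_nhds hneg)).exists
    have := integral_nonneg_of_ae (hlow n)
    rw [integral_add (hg n) (hu n)] at this
    linarith [h_int n]
  have := (ENNReal.ofReal_le_ofReal_iff hw0).1 (hfatou.trans hright)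
  rw [integral_add hw hv] at this
  linarith

/-- The product of an integrable function of the second variable with a bounded function,
continuous on a product set. -/
theorem integrable_prod_mul_of_continuousOn {a : ℝ → ℝ} {B : ℝ × ℝ → ℝ} {S R : Set ℝ} {C : ℝ}
    (hS : MeasurableSet S) (hR : MeasurableSet R) (hSfin : volume S ≠ ⊤)
    (ha : IntegrableOn a R volume) (hB : ContinuousOn B (S ×ˢ R))
    (hC : ∀ z ∈ S ×ˢ R, |B z| ≤ C) :
    Integrable (fun z : ℝ × ℝ => a z.2 * B z)
      ((volume.restrict S).prod (volume.restrict R)) := by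
  have : IsFiniteMeasure (volume.restrict S) := ⟨by
    rw [Measure.restrict_apply_univ]; exact hSfin.lt_top⟩
  have ha2 : Integrable (fun z : ℝ × ℝ => a z.2)
      ((volume.restrict S).prod (volume.restrict R)) := ha.comp_snd _
  refine ha2.mul_bdd (c := C) ?_ ?_
  · rw [Measure.prod_restrict]
    exact hB.aestronglyMeasurable (hS.prod hR)
  · rw [Measure.prod_restrict]
    exact (ae_restrict_iff' (hS.prod hR)).2 (Eventually.of_forall hC)

/-- If the increments of a Lipschitz function `G` and of an absolutely continuous function `q`
have nonpositive scalar product for all small steps, then so do their derivatives. -/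
theorem integral_deriv_mul_deriv_nonpos {G G' q q' : ℝ → ℝ} (hq : IsPrimitive q q') {a b K : ℝ}
    (ha : 0 < a) (hab : a ≤ b) (h_int : IntervalIntegrable (fun t => G' t * q' t) volume a b)
    (hG : ∀ᵐ t, t ∈ Ioc a b → HasDerivAt G (G' t) t)
    (hGK : ∀ h ∈ Ioc (0:ℝ) 1, ∀ t ∈ Ioc a b, |G (t + h) - G t| ≤ K * h)
    (hincr : ∀ h ∈ Ioc (0:ℝ) 1,
      IntervalIntegrable (fun t => (G (t + h) - G t) * (q (t + h) - q t)) volume a b)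
    (hneg : ∀ h ∈ Ioc (0:ℝ) 1, ∫ t in a..b, (G (t + h) - G t) * (q (t + h) - q t) ≤ 0) :
    ∫ t in a..b, G' t * q' t ≤ 0 := by
  have hb : 0 < b := ha.trans_le hab
  set F : ℝ → ℝ := fun t => ∫ s in (0:ℝ)..t, |q' s|
  have hF : IsPrimitive F fun t => |q' t| := IsPrimitive.integral_self fun T hT => (hq.1 T hT).abs
  have hFc := hF.continuousOn
  have hΦ := IsPrimitive.of_continuousOn hFc
  set Φ : ℝ → ℝ := fun t => ∫ s in (0:ℝ)..t, F s
  set h : ℕ → ℝ := fun n => 1 / ((n : ℝ) + 1) with hh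
  have hpos : ∀ n, 0 < h n := fun n => Nat.one_div_pos_of_nat
  have hle : ∀ n, h n ≤ 1 := fun n => by
    rw [hh, div_le_one (by positivity)]
    linarith [(n.cast_nonneg : (0:ℝ) ≤ n)]
  have hlim : Tendsto h atTop (𝓝[≠] 0) :=
    tendsto_nhdsWithin_iff.2 ⟨tendsto_one_div_add_atTop_nhds_zero_nat,
      Eventually.of_forall fun n => (hpos n).ne'⟩
  have hslope : ∀ {f : ℝ → ℝ} {d t : ℝ}, HasDerivAt f d t →
      Tendsto (fun n => (h n)⁻¹ * (f (t + h n) - f t)) atTop (𝓝 d) := fun hd =>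
    (hasDerivAt_iff_tendsto_slope_zero.1 hd).comp hlim
  rcases hab.eq_or_lt with rfl | hlt
  · simp
  have hK : 0 ≤ K := by
    simpa using (abs_nonneg _).trans (hGK 1 ⟨one_pos, le_rfl⟩ b ⟨hlt, le_rfl⟩)
  have hDF : ∀ n, IntervalIntegrable (fun t => F (t + h n) - F t) volume a b := fun n =>
    ((hF.increment (hpos n).le).continuousOn.mono (by
      rw [uIcc_of_le hab]; exact fun t ht => ha.le.trans ht.1)).intervalIntegrable
  have hqF : ∀ n, ∀ t ∈ Ioc a b, |q (t + h n) - q t| ≤ F (t + h n) - F t := fun n t ht => by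
    have h1 : 0 ≤ t := ha.le.trans ht.1.le
    have h2 : t ≤ t + h n := by linarith [hpos n]
    rw [hq.sub_eq h1 (h1.trans h2), hF.sub_eq h1 (h1.trans h2)]
    exact intervalIntegral.abs_integral_le_integral_abs h2
  rw [intervalIntegral.integral_of_le hab]
  refine integral_nonpos_of_tendsto_of_neg_le
    (u := fun n t => ((h n)⁻¹ * (G (t + h n) - G t)) * ((h n)⁻¹ * (q (t + h n) - q t)))
    (g := fun n t => K * ((h n)⁻¹ * (F (t + h n) - F t))) (w := fun t => K * |q' t|)
    (fun n => ?_) (fun n => ?_) h_int.1 ?_ ?_ ?_ (fun n => ?_) (fun n => ?_) ?_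
  · convert (hincr (h n) ⟨hpos n, hle n⟩).1.const_mul ((h n)⁻¹ * (h n)⁻¹) using 2
    ring
  · exact ((hDF n).1.const_mul _).const_mul _
  · exact (hF.intervalIntegrable ha.le hb.le).1.const_mul _
  · refine (ae_restrict_iff' measurableSet_Ioc).2 ?_
    filter_upwards [hG, hq.ae_hasDerivAt] with t h1 h2 ht
    exact (hslope (h1 ht)).mul (hslope (h2 (ha.trans ht.1)))
  · refine (ae_restrict_iff' measurableSet_Ioc).2 ?_
    filter_upwards [hF.ae_hasDerivAt] with t h2 ht
    exact (hslope (h2 (ha.trans ht.1))).const_mul K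
  · refine (ae_restrict_iff' measurableSet_Ioc).2 (Eventually.of_forall fun t ht => ?_)
    refine (neg_le_neg ?_).trans (neg_abs_le _)
    have hi : 0 ≤ (h n)⁻¹ := (inv_pos.2 (hpos n)).le
    rw [abs_mul, abs_mul, abs_mul, abs_of_nonneg hi]
    have h1 : (h n)⁻¹ * |G (t + h n) - G t| ≤ K := by
      rw [inv_mul_le_iff₀ (hpos n), mul_comm]
      exact hGK _ ⟨hpos n, hle n⟩ t ht
    exact mul_le_mul h1 (mul_le_mul_of_nonneg_left (hqF n t ht) hi) (by positivity) hK
  · rw [← intervalIntegral.integral_of_le hab]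
    have : (fun t => ((h n)⁻¹ * (G (t + h n) - G t)) * ((h n)⁻¹ * (q (t + h n) - q t))) =
        fun t => ((h n)⁻¹ * (h n)⁻¹) * ((G (t + h n) - G t) * (q (t + h n) - q t)) := by
      ext t; ring
    rw [this, intervalIntegral.integral_const_mul]
    exact mul_nonpos_of_nonneg_of_nonpos (mul_self_nonneg _) (hneg _ ⟨hpos n, hle n⟩)
  · simp only [← intervalIntegral.integral_of_le hab, intervalIntegral.integral_const_mul]
    refine Tendsto.const_mul K ?_
    rw [← hF.sub_eq ha.le hb.le]
    refine ((hslope (hΦ.hasDerivAt hFc hb)).sub (hslope (hΦ.hasDerivAt hFc ha))).congr fun n => ?_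
    have h0 := (hΦ.increment (hpos n).le).sub_eq ha.le hb.le
    rw [← h0]
    ring

end

/-- Second-order (convexity) energy inequality for the truncated Preisach operator in the
simplest case of a density constant in `v`: with `G_R[p](t) = ∫₀^∞ a(r)·𝔭_r[p](t) dr`,
`a ≥ 0`, and `2π`-periodic `p ∈ W^{2,1}_per`, one has `−∫_{2π}^{4π} G_R[p]_t p_tt dt ≥ 0`. -/
theorem preisach_second_order_inequality
    (a : ℝ → ℝ) (ha0 : ∀ r, 0 ≤ a r) (ha : IntegrableOn a (Set.Ioi 0) volume)
    (p p' p'' : ℝ → ℝ)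
    (hp' : ∀ T > (0:ℝ), IntervalIntegrable p' volume 0 T)
    (hp'' : ∀ T > (0:ℝ), IntervalIntegrable p'' volume 0 T)
    (hp : ∀ t ∈ Set.Ici (0:ℝ), p t = p 0 + ∫ s in (0:ℝ)..t, p' s)
    (hpd : ∀ t ∈ Set.Ici (0:ℝ), p' t = p' 0 + ∫ s in (0:ℝ)..t, p'' s)
    (hper : ∀ t ∈ Set.Ici (0:ℝ), p (t + 2 * Real.pi) = p t)
    (hper' : ∀ t ∈ Set.Ici (0:ℝ), p' (t + 2 * Real.pi) = p' t)
    -- the family of play outputs `ξ r = 𝔭_r[p]` with a.e. derivatives `ξ' r`,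
    -- `2π`-periodic from time `2π` on:
    (ξ ξ' : ℝ → ℝ → ℝ) (hξ : ∀ r > (0:ℝ), IsPlayLoc r p (ξ r) (ξ' r))
    (hξper : ∀ r > (0:ℝ), ∀ t ∈ Set.Ici (2 * Real.pi), ξ r (t + 2 * Real.pi) = ξ r t)
    -- `G'` is the a.e. time derivative of `G_R[p] : t ↦ ∫₀^∞ a(r)·ξ r t dr`:
    (G' : ℝ → ℝ) (hG'int : IntervalIntegrable G' volume (2 * Real.pi) (4 * Real.pi))
    (hGrep : ∀ t ∈ Set.Ici (2 * Real.pi),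
        (∫ r in Set.Ioi (0:ℝ), a r * ξ r t) =
        (∫ r in Set.Ioi (0:ℝ), a r * ξ r (2 * Real.pi)) +
          ∫ s in (2 * Real.pi)..t, G' s) :
    0 ≤ -∫ t in (2 * Real.pi)..(4 * Real.pi), G' t * p'' t := by
  have hP : IsPrimitive p p' := ⟨hp', hp⟩
  have hP' : IsPrimitive p' p'' := ⟨hp'', hpd⟩
  have hπ := Real.pi_gt_three
  set T : ℝ := 6 * Real.pi with hT
  have hT0 : 0 ≤ T := by positivity
  obtain ⟨L, hL⟩ := isCompact_Icc.exists_bound_of_continuousOn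
    (hP'.continuousOn.mono (Icc_subset_Ici_self : Icc 0 T ⊆ Ici 0))
  have hL0 : 0 ≤ L := (norm_nonneg _).trans (hL 0 ⟨le_rfl, hT0⟩)
  have hpL : ∀ u ∈ Icc 0 T, ∀ v ∈ Icc 0 T, |p v - p u| ≤ L * |v - u| := fun u hu v hv => by
    rw [hP.sub_eq hu.1 hv.1]
    refine intervalIntegral.norm_integral_le_of_norm_le_const fun x hx => hL x ?_
    exact uIcc_subset_Icc hu hv (uIoc_subset_uIcc hx)
  have hξL : ∀ r > 0, ∀ u v, 0 ≤ u → u ≤ v → v ≤ T → |ξ r v - ξ r u| ≤ L * (v - u) :=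
    fun r hr u v hu huv hv => (hξ r hr).abs_sub_le_mul hr.le hpL hL0 hu huv hv
  have hbound : ∀ r > 0, ∀ t ∈ Icc 0 T, |ξ r t| ≤ |p 0| + L * T := fun r hr t ht => by
    have h1 := hξL r hr 0 t le_rfl ht.1 ht.2
    have h2 := (hξ r hr).abs_zero_le hr.le
    have h3 := abs_sub_abs_le_abs_sub (ξ r t) (ξ r 0)
    have h4 : L * (t - 0) ≤ L * T := mul_le_mul_of_nonneg_left (by linarith [ht.2]) hL0
    linarith
  have hlip : ∀ t ∈ Ici (0:ℝ), LipschitzOnWith 1 (fun r => ξ r t) (Ioi 0) := fun t ht =>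
    LipschitzOnWith.of_dist_le_mul fun r hr s hs => by
      simpa [Real.dist_eq] using
        (hξ r hr).abs_sub_le_abs_sub (hξ s hs) (le_of_lt hr) (le_of_lt hs) ht
  have hjoint : ContinuousOn (fun z : ℝ × ℝ => ξ z.2 z.1) (Ici 0 ×ˢ Ioi 0) :=
    continuousOn_prod_of_continuousOn_lipschitzOnWith' _ 1 hlip
      fun r hr => (hξ r hr).isPrimitive.continuousOn
  have haξ : ∀ t ∈ Icc 0 T, IntegrableOn (fun r => a r * ξ r t) (Ioi 0) := fun t ht =>
    Integrable.mul_bdd (c := |p 0| + L * T) ha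
      ((hlip t ht.1).continuousOn.aestronglyMeasurable measurableSet_Ioi)
      ((ae_restrict_iff' measurableSet_Ioi).2 (Filter.Eventually.of_forall fun r hr =>
        hbound r hr t ht))
  set G : ℝ → ℝ := fun t => ∫ r in Ioi (0:ℝ), a r * ξ r t
  have hincr : ∀ h ∈ Ioc (0:ℝ) 1, ∀ t ∈ Ioc (2 * Real.pi) (4 * Real.pi),
      G (t + h) - G t = ∫ r in Ioi (0:ℝ), a r * (ξ r (t + h) - ξ r t) := fun h hh t ht => by
    have h1 := haξ t ⟨by linarith [ht.1], by linarith [ht.2]⟩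
    have h2 := haξ (t + h) ⟨by linarith [ht.1, hh.1], by linarith [ht.2, hh.2]⟩
    simp only [mul_sub]
    rw [integral_sub h2 h1]
  have hprod : ∀ h ∈ Ioc (0:ℝ) 1,
      Integrable (fun z : ℝ × ℝ => a z.2 * ((ξ z.2 (z.1 + h) - ξ z.2 z.1) *
        (p' (z.1 + h) - p' z.1)))
        ((volume.restrict (uIoc (2 * Real.pi) (4 * Real.pi))).prod
          (volume.restrict (Ioi 0))) := fun h hh => by
    rw [uIoc_of_le (by linarith)]
    have hsub : ∀ z ∈ Ioc (2 * Real.pi) (4 * Real.pi) ×ˢ Ioi (0:ℝ), 0 ≤ z.1 := fun z hz => by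
      linarith [hz.1.1]
    have hmapz : ContinuousOn (fun z : ℝ × ℝ => ξ z.2 z.1)
        (Ioc (2 * Real.pi) (4 * Real.pi) ×ˢ Ioi (0:ℝ)) :=
      hjoint.mono fun z hz => ⟨hsub z hz, hz.2⟩
    have hmaph : ContinuousOn (fun z : ℝ × ℝ => ξ z.2 (z.1 + h))
        (Ioc (2 * Real.pi) (4 * Real.pi) ×ˢ Ioi (0:ℝ)) :=
      hjoint.comp (f := fun z : ℝ × ℝ => (z.1 + h, z.2)) (by fun_prop)
        fun z hz => ⟨add_nonneg (hsub z hz) hh.1.le, hz.2⟩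
    refine integrable_prod_mul_of_continuousOn (C := L * h * (L + L)) measurableSet_Ioc
      measurableSet_Ioi (by simp) ha ?_ fun z hz => ?_
    · exact (hmaph.sub hmapz).mul ((hP'.increment hh.1.le).continuousOn.comp
        continuousOn_fst fun z hz => hsub z hz)
    · have hz0 := hsub z hz
      have hzh : z.1 + h ≤ T := by linarith [hz.1.2, hh.2]
      have h1 := hξL z.2 hz.2 z.1 (z.1 + h) hz0 (by linarith [hh.1]) hzh
      have h2 : |p' (z.1 + h) - p' z.1| ≤ L + L :=
        (abs_sub _ _).trans (add_le_add (hL _ ⟨by linarith [hh.1], hzh⟩)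
          (hL _ ⟨hz0, by linarith [hh.1]⟩))
      rw [add_sub_cancel_left] at h1
      rw [abs_mul]
      exact mul_le_mul h1 h2 (abs_nonneg _) (mul_nonneg hL0 hh.1.le)
  have hfub : ∀ h ∈ Ioc (0:ℝ) 1, ∀ t ∈ Ioc (2 * Real.pi) (4 * Real.pi),
      ∫ r in Ioi (0:ℝ), a r * ((ξ r (t + h) - ξ r t) * (p' (t + h) - p' t)) =
      (G (t + h) - G t) * (p' (t + h) - p' t) := fun h hh t ht => by
    rw [hincr h hh t ht, ← integral_mul_const]
    simp only [mul_assoc]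
  have hab : 2 * Real.pi ≤ 4 * Real.pi := by linarith
  by_cases h_int : IntervalIntegrable (fun t => G' t * p'' t) volume (2 * Real.pi) (4 * Real.pi)
  swap
  · rw [intervalIntegral.integral_undef h_int, neg_zero]
  rw [neg_nonneg]
  refine integral_deriv_mul_deriv_nonpos (G := G) (K := (∫ r in Ioi (0:ℝ), a r) * L) hP'
    (by linarith) hab h_int ?_ (fun h hh t ht => ?_) (fun h hh => ?_) (fun h hh => ?_)
  · filter_upwards [hG'int.ae_hasDerivAt_integral] with t h1 ht
    have h2 := h1 (uIoc_subset_uIcc (by rwa [uIoc_of_le hab])) (2 * Real.pi) left_mem_uIcc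
    refine (h2.const_add (G (2 * Real.pi))).congr_of_eventuallyEq ?_
    filter_upwards [Ioi_mem_nhds ht.1] with x hx using hGrep x (mem_Ici.2 (le_of_lt hx))
  · rw [hincr h hh t ht, mul_assoc, ← integral_mul_const, ← Real.norm_eq_abs]
    refine norm_integral_le_of_norm_le (ha.mul_const _) ?_
    refine (ae_restrict_iff' measurableSet_Ioi).2 (Filter.Eventually.of_forall fun r hr => ?_)
    have h1 := hξL r hr t (t + h) (by linarith [ht.1]) (by linarith [hh.1])
      (by linarith [ht.2, hh.2])
    rw [add_sub_cancel_left] at h1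
    rw [Real.norm_eq_abs, abs_mul, abs_of_nonneg (ha0 r)]
    exact mul_le_mul_of_nonneg_left h1 (ha0 r)
  · rw [intervalIntegrable_iff]
    refine IntegrableOn.congr_fun (hprod h hh).integral_prod_left (fun t ht => ?_)
      measurableSet_uIoc
    rw [uIoc_of_le hab] at ht
    exact hfub h hh t ht
  · have hswap := intervalIntegral_integral_swap
      (f := fun t r => a r * ((ξ r (t + h) - ξ r t) * (p' (t + h) - p' t))) (hprod h hh)
    have hcongr : ∫ t in (2 * Real.pi)..(4 * Real.pi),
        (G (t + h) - G t) * (p' (t + h) - p' t) =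
        ∫ t in (2 * Real.pi)..(4 * Real.pi),
          ∫ r in Ioi (0:ℝ), a r * ((ξ r (t + h) - ξ r t) * (p' (t + h) - p' t)) := by
      refine intervalIntegral.integral_congr_ae (Filter.Eventually.of_forall fun t ht => ?_)
      rw [uIoc_of_le hab] at ht
      exact (hfub h hh t ht).symm
    rw [hcongr]
    refine hswap.trans_le (setIntegral_nonpos measurableSet_Ioi fun r hr => ?_)
    have h2π : (0:ℝ) ≤ 2 * Real.pi := by positivity
    have hb : 4 * Real.pi = 2 * Real.pi + 2 * Real.pi := by ring
    have hbh : 4 * Real.pi + h = 2 * Real.pi + h + 2 * Real.pi := by ring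
    have hneg := (hξ r hr).integral_increment_mul_nonpos hP hh.1.le h2π hab
      (by rw [hb]; exact hξper r hr _ (mem_Ici.2 le_rfl))
      (by rw [hbh]; exact hξper r hr _ (mem_Ici.2 (by linarith [hh.1])))
      (by rw [hb]; exact hper _ h2π)
      (by rw [hbh]; exact hper _ (mem_Ici.2 (by linarith [hh.1])))
    simp only [intervalIntegral.integral_const_mul]
    exact mul_nonpos_of_nonneg_of_nonpos (ha0 r) hneg
end

section
/- The Preisach energy identity: for every p ∈ W^{1,1}(0,T), the equality G[p]'(t) · p(t) − V[p]'(t) = |D[p]'(t)| holds for almost every t ∈ (0,T), where V[p](t) = ∫₀^∞ ∫₀^{𝔭_r[p](t)} v ρ(r,v) dv dr and D[p](t) = ∫₀^∞ ∫₀^{𝔭_r[p](t)} r ρ(r,v) dv dr. -/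
open MeasureTheory Set

/-- `IsPlay T r p ξ ξ'` says that `ξ ∈ W^{1,1}(0,T)` (with a.e. derivative `ξ'`) solves
the play variational inequality with input `p` and memory parameter `r`. -/
def IsPlay (T r : ℝ) (p ξ ξ' : ℝ → ℝ) : Prop :=
  IntervalIntegrable ξ' volume 0 T ∧
  (∀ t ∈ Set.Icc 0 T, ξ t = ξ 0 + ∫ s in (0:ℝ)..t, ξ' s) ∧
  (∀ t ∈ Set.Icc 0 T, |p t - ξ t| ≤ r) ∧
  (∀ᵐ t ∂(volume.restrict (Set.Icc 0 T)),
      ∀ z ∈ Set.Icc (-r) r, 0 ≤ ξ' t * (p t - ξ t - z)) ∧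
  p 0 - ξ 0 = max (-r) (min (p 0) r)

/-- A function with a.e. nonpositive derivative wherever it exceeds `c` cannot rise above `c`. -/
lemma le_of_ae_nonpos_above {f f' : ℝ → ℝ} {a b c : ℝ} (hab : a ≤ b)
    (hf : ContinuousOn f (Icc a b))
    (hrep : ∀ x ∈ Icc a b, f b - f x = ∫ s in x..b, f' s)
    (hneg : ∀ᵐ t ∂(volume.restrict (Icc a b)), c < f t → f' t ≤ 0)
    (ha : f a ≤ c) : f b ≤ c := by
  have hcompact : IsCompact (Icc a b ∩ f ⁻¹' Iic c) :=
    isCompact_Icc.of_isClosed_subset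
      (hf.preimage_isClosed_of_isClosed isClosed_Icc isClosed_Iic) inter_subset_left
  obtain ⟨m, ⟨hm, hmc⟩, hmax⟩ := hcompact.exists_isGreatest ⟨a, left_mem_Icc.2 hab, ha⟩
  have hint : ∫ s in m..b, f' s ≤ 0 := by
    rw [intervalIntegral.integral_of_le hm.2]
    refine integral_nonpos_of_ae ?_
    have hsub : Ioc m b ⊆ Icc a b := fun s hs => ⟨hm.1.trans hs.1.le, hs.2⟩
    filter_upwards [ae_restrict_of_ae_restrict_of_subset hsub hneg,
      ae_restrict_mem measurableSet_Ioc] with s hs hsm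
    refine hs (not_le.1 fun hle => ?_)
    exact absurd (hmax ⟨hsub hsm, hle⟩) (not_le.2 hsm.1)
  have := hrep m hm
  have hmc' : f m ≤ c := hmc
  linarith

lemma continuousOn_of_eq_integral {T : ℝ} (hT : 0 ≤ T) {f f' : ℝ → ℝ}
    (hint : IntervalIntegrable f' volume 0 T)
    (hf : ∀ t ∈ Icc 0 T, f t = f 0 + ∫ s in (0:ℝ)..t, f' s) : ContinuousOn f (Icc 0 T) := by
  have h := intervalIntegral.continuousOn_primitive_interval' hint left_mem_uIcc
  rw [uIcc_of_le hT] at h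
  exact (continuousOn_const.add h).congr hf

lemma sub_eq_integral_of_eq_integral {T : ℝ} {f f' : ℝ → ℝ}
    (hint : IntervalIntegrable f' volume 0 T)
    (hf : ∀ t ∈ Icc 0 T, f t = f 0 + ∫ s in (0:ℝ)..t, f' s) {x y : ℝ}
    (hx : x ∈ Icc 0 T) (hy : y ∈ Icc 0 T) : f y - f x = ∫ s in x..y, f' s := by
  have hsub : ∀ z ∈ Icc 0 T, IntervalIntegrable f' volume 0 z := fun z hz =>
    hint.mono_set (uIcc_subset_uIcc left_mem_uIcc (Icc_subset_uIcc hz))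
  rw [hf x hx, hf y hy, ← intervalIntegral.integral_interval_sub_left (hsub y hy) (hsub x hx)]
  ring

namespace IsPlay

variable {T r : ℝ} {p ξ ξ' : ℝ → ℝ}

lemma neg (h : IsPlay T r p ξ ξ') (hr : 0 < r) : IsPlay T r (-p) (-ξ) (-ξ') := by
  obtain ⟨h1, h2, h3, h4, h5⟩ := h
  refine ⟨h1.neg, fun t ht => ?_, fun t ht => ?_, ?_, ?_⟩
  · simp only [Pi.neg_apply, intervalIntegral.integral_neg]
    linarith [h2 t ht]
  · have := h3 t ht
    rw [abs_le] at this ⊢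
    simp only [Pi.neg_apply]
    constructor <;> linarith [this.1, this.2]
  · filter_upwards [h4] with t ht z hz
    have := ht (-z) ⟨by linarith [hz.2], by linarith [hz.1]⟩
    simp only [Pi.neg_apply]
    linarith
  · simp only [Pi.neg_apply]
    grind

lemma le_of_input_le (h : IsPlay T r p ξ ξ') (hr : 0 < r) {a b c : ℝ} (ha : 0 ≤ a)
    (hab : a ≤ b) (hb : b ≤ T) (hc : ξ a ≤ c) (hp : ∀ τ ∈ Icc a b, p τ ≤ c + r) :
    ξ b ≤ c := by
  have hsub : Icc a b ⊆ Icc 0 T := Icc_subset_Icc ha hb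
  refine le_of_ae_nonpos_above (f' := ξ') hab
    ((continuousOn_of_eq_integral ((ha.trans hab).trans hb) h.1 h.2.1).mono hsub)
    (fun x hx => sub_eq_integral_of_eq_integral h.1 h.2.1 (hsub hx)
      (hsub (right_mem_Icc.2 hab))) ?_ hc
  filter_upwards [ae_restrict_of_ae_restrict_of_subset hsub h.2.2.2.1,
    ae_restrict_mem measurableSet_Icc] with s hs hmem hlt
  have h1 := hs r ⟨by linarith, le_rfl⟩
  have h2 := hp s hmem
  by_contra! hpos
  nlinarith

lemma le_of_le_input (h : IsPlay T r p ξ ξ') (hr : 0 < r) {a b c : ℝ} (ha : 0 ≤ a)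
    (hab : a ≤ b) (hb : b ≤ T) (hc : c ≤ ξ a) (hp : ∀ τ ∈ Icc a b, c - r ≤ p τ) :
    c ≤ ξ b := by
  have := (h.neg hr).le_of_input_le hr ha hab hb (c := -c) (neg_le_neg hc)
    fun τ hτ => by simp only [Pi.neg_apply]; linarith [hp τ hτ]
  exact neg_le_neg_iff.1 this

lemma abs_le_max (h : IsPlay T r p ξ ξ') (hr : 0 < r) {M t : ℝ} (ht : t ∈ Icc 0 T)
    (hM : ∀ τ ∈ Icc 0 T, |p τ| ≤ M) : |ξ t| ≤ max (M - r) 0 := by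
  have h0 := h.2.2.2.2
  have hp0 := abs_le.1 (hM 0 ⟨le_rfl, ht.1.trans ht.2⟩)
  have hp : ∀ τ ∈ Icc 0 t, |p τ| ≤ M := fun τ hτ => hM τ ⟨hτ.1, hτ.2.trans ht.2⟩
  refine abs_le.2 ⟨h.le_of_le_input hr le_rfl ht.1 ht.2 (by grind) fun τ hτ => ?_,
    h.le_of_input_le hr le_rfl ht.1 ht.2 (by grind) fun τ hτ => ?_⟩
  · linarith [abs_le.1 (hp τ hτ), le_max_left (M - r) 0]
  · linarith [abs_le.1 (hp τ hτ), le_max_left (M - r) 0]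

lemma abs_sub_le (h : IsPlay T r p ξ ξ') (hr : 0 < r) {t s ε : ℝ} (ht : 0 ≤ t) (hts : t ≤ s)
    (hs : s ≤ T) (hε : ∀ τ ∈ Icc t s, |p τ - p t| ≤ ε) : |ξ s - ξ t| ≤ ε := by
  have h0 := abs_le.1 (h.2.2.1 t ⟨ht, hts.trans hs⟩)
  have hε0 : 0 ≤ ε := (abs_nonneg _).trans (hε t ⟨le_rfl, hts⟩)
  have hup := h.le_of_input_le hr ht hts hs (c := ξ t + ε) (by linarith)
    fun τ hτ => by linarith [(abs_le.1 (hε τ hτ)).2]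
  have hlo := h.le_of_le_input hr ht hts hs (c := ξ t - ε) (by linarith)
    fun τ hτ => by linarith [(abs_le.1 (hε τ hτ)).1]
  exact abs_le.2 ⟨by linarith, by linarith⟩

lemma le_of_input_ge (h : IsPlay T r p ξ ξ') (hr : 0 < r) {t s : ℝ} (ht : 0 ≤ t) (hts : t ≤ s)
    (hs : s ≤ T) (hp : ∀ τ ∈ Icc t s, p t ≤ p τ) : ξ t ≤ ξ s :=
  h.le_of_le_input hr ht hts hs le_rfl fun τ hτ => by
    linarith [hp τ hτ, abs_le.1 (h.2.2.1 t ⟨ht, hts.trans hs⟩)]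

lemma abs_input_sub_sub_le (h : IsPlay T r p ξ ξ') (hr : 0 < r) {t s ε v : ℝ} (ht : 0 ≤ t)
    (hts : t ≤ s) (hs : s ≤ T) (hε : ∀ τ ∈ Icc t s, |p τ - p t| ≤ ε)
    (hv : v ∈ Ioc (ξ t) (ξ s)) : |p t - v - r| ≤ ε := by
  have h0 := abs_le.1 (h.2.2.1 t ⟨ht, hts.trans hs⟩)
  have hε0 : 0 ≤ ε := (abs_nonneg _).trans (hε t ⟨le_rfl, hts⟩)
  have hup := h.le_of_input_le hr ht hts hs (c := max (ξ t) (p t + ε - r)) (le_max_left _ _)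
    fun τ hτ => by linarith [(abs_le.1 (hε τ hτ)).2, le_max_right (ξ t) (p t + ε - r)]
  obtain ⟨hv1, hv2⟩ := hv
  rw [abs_le]
  rcases le_max_iff.1 hup with hle | hle <;> constructor <;> linarith

lemma sub_le_abs_sub {q : ℝ} {η η' : ℝ → ℝ} (h : IsPlay T r p ξ ξ') (hr : 0 < r)
    (k : IsPlay T q p η η') (hq : 0 < q) {t : ℝ} (ht : t ∈ Icc 0 T) :
    ξ t - η t ≤ |r - q| := by
  have hT : 0 ≤ T := ht.1.trans ht.2
  have hsub : Icc 0 t ⊆ Icc 0 T := Icc_subset_Icc_right ht.2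
  have hint : ∀ z ∈ Icc 0 T, ∀ {g : ℝ → ℝ}, IntervalIntegrable g volume 0 T →
      IntervalIntegrable g volume z t := fun z hz g hg =>
    hg.mono_set (uIcc_subset_uIcc (Icc_subset_uIcc hz) (Icc_subset_uIcc ht))
  refine le_of_ae_nonpos_above (f := fun s => ξ s - η s) (f' := fun s => ξ' s - η' s) ht.1
    (((continuousOn_of_eq_integral hT h.1 h.2.1).sub
      (continuousOn_of_eq_integral hT k.1 k.2.1)).mono hsub) (fun x hx => ?_) ?_ ?_
  · rw [intervalIntegral.integral_sub (hint x (hsub hx) h.1) (hint x (hsub hx) k.1),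
      ← sub_eq_integral_of_eq_integral h.1 h.2.1 (hsub hx) ht,
      ← sub_eq_integral_of_eq_integral k.1 k.2.1 (hsub hx) ht]
    ring
  · filter_upwards [ae_restrict_of_ae_restrict_of_subset hsub h.2.2.2.1,
      ae_restrict_of_ae_restrict_of_subset hsub k.2.2.2.1,
      ae_restrict_mem measurableSet_Icc] with s hs ks hmem hlt
    have h1 := hs r ⟨by linarith, le_rfl⟩
    have k1 := ks (-q) ⟨le_rfl, by linarith⟩
    have h2 := abs_le.1 (h.2.2.1 s (hsub hmem))
    have k2 := abs_le.1 (k.2.2.1 s (hsub hmem))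
    have hl := le_abs_self (r - q)
    have hl' := neg_abs_le (r - q)
    have hξ : ξ' s ≤ 0 := by
      by_contra! hpos
      nlinarith
    have hη : 0 ≤ η' s := by
      by_contra! hpos
      nlinarith
    linarith
  · have h0 := h.2.2.2.2
    have k0 := k.2.2.2.2
    have hl := le_abs_self (r - q)
    have hl' := neg_abs_le (r - q)
    grind

end IsPlay

lemma aestronglyMeasurable_integral_zero_to {K : ℝ → ℝ → ℝ}
    (hK : Measurable (Function.uncurry K)) {x : ℝ → ℝ} (hx : ContinuousOn x (Ioi 0)) :
    AEStronglyMeasurable (fun r => ∫ v in (0:ℝ)..x r, K r v) (volume.restrict (Ioi 0)) := by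
  have hX : AEMeasurable x (volume.restrict (Ioi 0)) := hx.aemeasurable measurableSet_Ioi
  have hscaled : StronglyMeasurable fun r =>
      hX.mk x r * ∫ u in Ioc (0:ℝ) 1, K r (hX.mk x r * u) := by
    refine hX.measurable_mk.stronglyMeasurable.mul ?_
    refine StronglyMeasurable.integral_prod_right
      (f := fun r u => K r (hX.mk x r * u)) (Measurable.stronglyMeasurable ?_)
    exact hK.comp (measurable_fst.prodMk
      ((hX.measurable_mk.comp measurable_fst).mul measurable_snd))
  refine ⟨_, hscaled, ?_⟩
  filter_upwards [hX.ae_eq_mk] with r hr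
  rw [← hr, ← intervalIntegral.integral_of_le zero_le_one,
    intervalIntegral.mul_integral_comp_mul_left, mul_zero, mul_one]

section Density

variable {ρ : ℝ → ℝ → ℝ} {ρs : ℝ → ℝ} {M : ℝ}

lemma intervalIntegrable_affine_mul_density (hρmeas : Measurable (Function.uncurry ρ))
    (hρbd : ∀ r v, 0 ≤ ρ r v ∧ ρ r v ≤ ρs r) (α β γ r a b : ℝ) :
    IntervalIntegrable (fun v => (α + β * v + γ * r) * ρ r v) volume a b := by
  refine IntervalIntegrable.continuousOn_mul ?_ (by fun_prop)
  refine (intervalIntegrable_const (c := ρs r)).mono_fun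
    (hρmeas.of_uncurry_left.aestronglyMeasurable) (Filter.Eventually.of_forall fun v => ?_)
  simp only [Real.norm_of_nonneg (hρbd r v).1]
  exact (hρbd r v).2.trans (le_abs_self _)

lemma abs_integral_affine_mul_density_le (hρbd : ∀ r v, 0 ≤ ρ r v ∧ ρ r v ≤ ρs r)
    (α β γ : ℝ) {r a b : ℝ} (hr : 0 < r) (ha : |a| ≤ max (M - r) 0)
    (hb : |b| ≤ max (M - r) 0) :
    |∫ v in a..b, (α + β * v + γ * r) * ρ r v| ≤
      (|α| + |β| * M + |γ| * M) * ρs r * |b - a| := by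
  rcases lt_or_ge M r with hMr | hrM
  · rw [max_eq_right (by linarith)] at ha hb
    simp [abs_nonpos_iff.1 ha, abs_nonpos_iff.1 hb]
  rw [max_eq_left (by linarith)] at ha hb
  rw [← Real.norm_eq_abs]
  refine intervalIntegral.norm_integral_le_of_norm_le_const fun v hv => ?_
  have hv' : |v| ≤ M := by
    rw [abs_le] at ha hb ⊢
    rw [mem_uIoc] at hv
    rcases hv with hv | hv <;> constructor <;> linarith [hv.1, hv.2, ha.1, ha.2, hb.1, hb.2]
  rw [norm_mul, Real.norm_of_nonneg (hρbd r v).1, Real.norm_eq_abs]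
  have hw : |α + β * v + γ * r| ≤ |α| + |β| * M + |γ| * M := by
    refine (abs_add_three _ _ _).trans ?_
    rw [abs_mul, abs_mul, abs_of_pos hr]
    gcongr
  exact mul_le_mul hw (hρbd r v).2 (hρbd r v).1 ((abs_nonneg _).trans hw)

lemma integrableOn_integral_affine_mul_density (hρmeas : Measurable (Function.uncurry ρ))
    (hρbd : ∀ r v, 0 ≤ ρ r v ∧ ρ r v ≤ ρs r) (hρs : IntegrableOn ρs (Ioi 0) volume)
    (α β γ : ℝ) {x : ℝ → ℝ} (hx : ContinuousOn x (Ioi 0))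
    (hxM : ∀ r > 0, |x r| ≤ max (M - r) 0) :
    IntegrableOn (fun r => ∫ v in (0:ℝ)..x r, (α + β * v + γ * r) * ρ r v) (Ioi 0) := by
  have hK : Measurable (Function.uncurry fun r v => (α + β * v + γ * r) * ρ r v) :=
    Measurable.mul (f := fun z : ℝ × ℝ => α + β * z.2 + γ * z.1) (by fun_prop) hρmeas
  refine Integrable.mono' ((hρs.const_mul (|α| + |β| * |M| + |γ| * |M|)).mul_const |M|)
    (aestronglyMeasurable_integral_zero_to hK hx) ?_
  filter_upwards [ae_restrict_mem measurableSet_Ioi] with r hr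
  have hr : 0 < r := hr
  have hmax : max (M - r) 0 ≤ max (|M| - r) 0 :=
    max_le_max_right _ (sub_le_sub_right (le_abs_self M) r)
  have hle := abs_integral_affine_mul_density_le (M := |M|) hρbd α β γ hr (a := 0) (b := x r)
    (by simp) ((hxM r hr).trans hmax)
  refine hle.trans ?_
  have hρs0 : 0 ≤ ρs r := (hρbd r 0).1.trans (hρbd r 0).2
  rw [sub_zero]
  exact mul_le_mul_of_nonneg_left
    (((hxM r hr).trans hmax).trans (max_le (by linarith) (abs_nonneg M))) (by positivity)

lemma affine_combination_eq_integral (hρmeas : Measurable (Function.uncurry ρ))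
    (hρbd : ∀ r v, 0 ≤ ρ r v ∧ ρ r v ≤ ρs r) (hρs : IntegrableOn ρs (Ioi 0) volume)
    (α β γ : ℝ) {x : ℝ → ℝ} (hx : ContinuousOn x (Ioi 0))
    (hxM : ∀ r > 0, |x r| ≤ max (M - r) 0) :
    α * (∫ r in Ioi (0:ℝ), ∫ v in (0:ℝ)..x r, ρ r v) +
      β * (∫ r in Ioi (0:ℝ), ∫ v in (0:ℝ)..x r, v * ρ r v) +
      γ * (∫ r in Ioi (0:ℝ), ∫ v in (0:ℝ)..x r, r * ρ r v) =
    ∫ r in Ioi (0:ℝ), ∫ v in (0:ℝ)..x r, (α + β * v + γ * r) * ρ r v := by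
  have hG := integrableOn_integral_affine_mul_density hρmeas hρbd hρs 1 0 0 hx hxM
  have hV := integrableOn_integral_affine_mul_density hρmeas hρbd hρs 0 1 0 hx hxM
  have hD := integrableOn_integral_affine_mul_density hρmeas hρbd hρs 0 0 1 hx hxM
  have iG := fun r => intervalIntegrable_affine_mul_density hρmeas hρbd 1 0 0 r 0 (x r)
  have iV := fun r => intervalIntegrable_affine_mul_density hρmeas hρbd 0 1 0 r 0 (x r)
  have iD := fun r => intervalIntegrable_affine_mul_density hρmeas hρbd 0 0 1 r 0 (x r)
  simp only [one_mul, zero_mul, add_zero, zero_add] at hG hV hD iG iV iD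
  rw [← integral_const_mul, ← integral_const_mul, ← integral_const_mul,
    ← integral_add (hG.const_mul α) (hV.const_mul β),
    ← integral_add ((hG.const_mul α).fun_add (hV.const_mul β)) (hD.const_mul γ)]
  refine integral_congr_ae (Filter.Eventually.of_forall fun r => ?_)
  simp only
  rw [← intervalIntegral.integral_const_mul, ← intervalIntegral.integral_const_mul,
    ← intervalIntegral.integral_const_mul,
    ← intervalIntegral.integral_add ((iG r).const_mul α) ((iV r).const_mul β),
    ← intervalIntegral.integral_add (((iG r).const_mul α).add ((iV r).const_mul β))
      ((iD r).const_mul γ)]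
  congr 1 with v
  ring

lemma integral_affine_sub_integral_affine (hρmeas : Measurable (Function.uncurry ρ))
    (hρbd : ∀ r v, 0 ≤ ρ r v ∧ ρ r v ≤ ρs r) (hρs : IntegrableOn ρs (Ioi 0) volume)
    (α β γ : ℝ) {x y : ℝ → ℝ} (hx : ContinuousOn x (Ioi 0)) (hy : ContinuousOn y (Ioi 0))
    (hxM : ∀ r > 0, |x r| ≤ max (M - r) 0) (hyM : ∀ r > 0, |y r| ≤ max (M - r) 0) :
    (∫ r in Ioi (0:ℝ), ∫ v in (0:ℝ)..y r, (α + β * v + γ * r) * ρ r v) -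
      (∫ r in Ioi (0:ℝ), ∫ v in (0:ℝ)..x r, (α + β * v + γ * r) * ρ r v) =
    ∫ r in Ioi (0:ℝ), ∫ v in x r..y r, (α + β * v + γ * r) * ρ r v := by
  rw [← integral_sub
    (integrableOn_integral_affine_mul_density hρmeas hρbd hρs α β γ hy hyM)
    (integrableOn_integral_affine_mul_density hρmeas hρbd hρs α β γ hx hxM)]
  refine integral_congr_ae (Filter.Eventually.of_forall fun r => ?_)
  exact intervalIntegral.integral_interval_sub_left
    (intervalIntegrable_affine_mul_density hρmeas hρbd α β γ r 0 (y r))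
    (intervalIntegrable_affine_mul_density hρmeas hρbd α β γ r 0 (x r))

lemma abs_integral_integral_affine_le
    (hρbd : ∀ r v, 0 ≤ ρ r v ∧ ρ r v ≤ ρs r) (hρs : IntegrableOn ρs (Ioi 0) volume)
    (α β γ : ℝ) {x y : ℝ → ℝ} {ε : ℝ} (hM : 0 ≤ M)
    (hxM : ∀ r > 0, |x r| ≤ max (M - r) 0) (hyM : ∀ r > 0, |y r| ≤ max (M - r) 0)
    (hε : ∀ r > 0, |y r - x r| ≤ ε) :
    |∫ r in Ioi (0:ℝ), ∫ v in x r..y r, (α + β * v + γ * r) * ρ r v| ≤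
      (|α| + |β| * M + |γ| * M) * (∫ r in Ioi (0:ℝ), ρs r) * ε := by
  rw [← integral_const_mul, ← integral_mul_const, ← Real.norm_eq_abs]
  refine norm_integral_le_of_norm_le
    ((hρs.const_mul (|α| + |β| * M + |γ| * M)).mul_const ε) ?_
  filter_upwards [ae_restrict_mem measurableSet_Ioi] with r hr
  refine (abs_integral_affine_mul_density_le hρbd α β γ hr (hxM r hr) (hyM r hr)).trans ?_
  have hρs0 : 0 ≤ ρs r := (hρbd r 0).1.trans (hρbd r 0).2
  gcongr
  exact hε r hr

end Density

/-- A function that does not increase immediately to the right of `t` has derivative at most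
zero at `t`. -/
lemma HasDerivAt.nonpos_of_eventually_le {f : ℝ → ℝ} {f' t : ℝ} (hf : HasDerivAt f f' t)
    (h : ∀ᶠ s in nhdsWithin t (Ioi t), f s ≤ f t) : f' ≤ 0 := by
  refine le_of_tendsto (hasDerivAt_iff_tendsto_slope_left_right.1 hf).2 ?_
  filter_upwards [h, self_mem_nhdsWithin] with s hs hts
  rw [slope_def_field]
  exact div_nonpos_of_nonpos_of_nonneg (sub_nonpos.2 hs) (sub_nonneg.2 (le_of_lt hts))

lemma eventually_forall_Icc_of_eventually {P : ℝ → Prop} {t : ℝ} (ht : P t)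
    (h : ∀ᶠ s in nhdsWithin t (Ioi t), P s) :
    ∀ᶠ s in nhdsWithin t (Ioi t), ∀ τ ∈ Icc t s, P τ := by
  obtain ⟨u, hu, hsub⟩ := mem_nhdsGT_iff_exists_Ioo_subset.1 h
  filter_upwards [Ioo_mem_nhdsGT hu] with s hs τ hτ
  rcases hτ.1.eq_or_lt with rfl | hlt
  · exact ht
  · exact hsub ⟨hlt, hτ.2.trans_lt hs.2⟩

lemma HasDerivAt.eventually_le_of_pos {f : ℝ → ℝ} {f' t : ℝ} (hf : HasDerivAt f f' t)
    (h : 0 < f') : ∀ᶠ s in nhdsWithin t (Ioi t), f t ≤ f s := by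
  filter_upwards [(hasDerivAt_iff_tendsto_slope_left_right.1 hf).2.eventually_const_lt h,
    self_mem_nhdsWithin] with s hs hts
  rw [slope_def_field] at hs
  exact (sub_pos.1 ((div_pos_iff_of_pos_right (sub_pos.2 hts)).1 hs)).le

lemma HasDerivAt.eventually_abs_sub_le_of_eq_zero {f : ℝ → ℝ} {t η : ℝ}
    (hf : HasDerivAt f 0 t) (hη : 0 < η) :
    ∀ᶠ s in nhdsWithin t (Ioi t), |f s - f t| ≤ η * (s - t) := by
  have hslope := (hasDerivAt_iff_tendsto_slope_left_right.1 hf).2.abs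
  rw [abs_zero] at hslope
  filter_upwards [hslope.eventually_lt_const hη, self_mem_nhdsWithin] with s hs hts
  have hpos : 0 < s - t := sub_pos.2 hts
  rw [slope_def_field, abs_div, abs_of_pos hpos, div_lt_iff₀ hpos] at hs
  exact hs.le

lemma nonpos_of_forall_pos_le_mul {a b : ℝ} (h : ∀ η > 0, a ≤ η * b) : a ≤ 0 := by
  have hb : 0 < |b| + 1 := by positivity
  refine le_of_forall_pos_le_add fun ε hε => ?_
  have h1 := h (ε / (|b| + 1)) (by positivity)
  have h2 : ε / (|b| + 1) * b ≤ ε / (|b| + 1) * (|b| + 1) := by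
    gcongr
    linarith [le_abs_self b]
  rw [div_mul_cancel₀ _ hb.ne'] at h2
  linarith

lemma ae_hasDerivAt_of_eq_integral {T : ℝ} (hT : 0 ≤ T) {f f' : ℝ → ℝ}
    (hint : IntervalIntegrable f' volume 0 T)
    (hf : ∀ t ∈ Icc 0 T, f t = f 0 + ∫ s in (0:ℝ)..t, f' s) :
    ∀ᵐ t ∂(volume.restrict (Ioo 0 T)), HasDerivAt f (f' t) t := by
  rw [ae_restrict_iff' measurableSet_Ioo]
  filter_upwards [hint.ae_hasDerivAt_integral] with t ht htT
  rw [uIcc_of_le hT] at ht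
  have h := (ht (Ioo_subset_Icc_self htT) 0 (left_mem_Icc.2 hT)).const_add (f 0)
  refine h.congr_of_eventuallyEq ?_
  filter_upwards [Ioo_mem_nhds htT.1 htT.2] with s hs using hf s (Ioo_subset_Icc_self hs)

/-- The Preisach energy identity: `G[p]'(t)·p(t) − V[p]'(t) = |D[p]'(t)|` a.e. in `(0,T)`,
where `V[p](t) = ∫₀^∞∫₀^{𝔭_r[p](t)} v ρ(r,v) dv dr` is the Preisach potential and
`D[p](t) = ∫₀^∞∫₀^{𝔭_r[p](t)} r ρ(r,v) dv dr` the dissipation operator. -/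
theorem preisach_energy_identity (T : ℝ) (hT : 0 < T)
    (ρ : ℝ → ℝ → ℝ) (ρs : ℝ → ℝ)
    (hρmeas : Measurable (Function.uncurry ρ))
    (hρbd : ∀ r v, 0 ≤ ρ r v ∧ ρ r v ≤ ρs r)
    (hρs : IntegrableOn ρs (Set.Ioi 0) volume)
    (p p' : ℝ → ℝ) (hp' : IntervalIntegrable p' volume 0 T)
    (hp : ∀ t ∈ Set.Icc 0 T, p t = p 0 + ∫ s in (0:ℝ)..t, p' s)
    -- the family of play outputs `ξ r = 𝔭_r[p]` with a.e. derivatives `ξ' r`: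
    (ξ ξ' : ℝ → ℝ → ℝ) (hξ : ∀ r > (0:ℝ), IsPlay T r p (ξ r) (ξ' r))
    -- `G'`, `V'`, `D'` are the a.e. time derivatives of `G[p]`, `V[p]`, `D[p]`:
    (G' V' D' : ℝ → ℝ)
    (hG'int : IntervalIntegrable G' volume 0 T)
    (hV'int : IntervalIntegrable V' volume 0 T)
    (hD'int : IntervalIntegrable D' volume 0 T)
    (hGrep : ∀ t ∈ Set.Icc 0 T,
        (∫ r in Set.Ioi (0:ℝ), ∫ v in (0:ℝ)..(ξ r t), ρ r v) =
        (∫ r in Set.Ioi (0:ℝ), ∫ v in (0:ℝ)..(ξ r 0), ρ r v) + ∫ s in (0:ℝ)..t, G' s)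
    (hVrep : ∀ t ∈ Set.Icc 0 T,
        (∫ r in Set.Ioi (0:ℝ), ∫ v in (0:ℝ)..(ξ r t), v * ρ r v) =
        (∫ r in Set.Ioi (0:ℝ), ∫ v in (0:ℝ)..(ξ r 0), v * ρ r v) + ∫ s in (0:ℝ)..t, V' s)
    (hDrep : ∀ t ∈ Set.Icc 0 T,
        (∫ r in Set.Ioi (0:ℝ), ∫ v in (0:ℝ)..(ξ r t), r * ρ r v) =
        (∫ r in Set.Ioi (0:ℝ), ∫ v in (0:ℝ)..(ξ r 0), r * ρ r v) + ∫ s in (0:ℝ)..t, D' s) :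
    ∀ᵐ t ∂(volume.restrict (Set.Ioo 0 T)), G' t * p t - V' t = |D' t| := by
  obtain ⟨M, hM⟩ := isCompact_Icc.exists_bound_of_continuousOn
    (continuousOn_of_eq_integral hT.le hp' hp)
  simp only [Real.norm_eq_abs] at hM
  have hM0 : 0 ≤ M := (abs_nonneg _).trans (hM 0 ⟨le_rfl, hT.le⟩)
  have hξM : ∀ t ∈ Icc 0 T, ∀ r > 0, |ξ r t| ≤ max (M - r) 0 := fun t ht r hr =>
    (hξ r hr).abs_le_max hr ht hM
  have hξcont : ∀ t ∈ Icc 0 T, ContinuousOn (fun r => ξ r t) (Ioi 0) := fun t ht => by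
    refine LipschitzOnWith.continuousOn (K := 1) (LipschitzOnWith.of_dist_le_mul
      fun r hr q hq => ?_)
    rw [NNReal.coe_one, one_mul, Real.dist_eq, Real.dist_eq, abs_le]
    have h1 := (hξ r hr).sub_le_abs_sub hr (hξ q hq) hq ht
    have h2 := (hξ q hq).sub_le_abs_sub hq (hξ r hr) hr ht
    rw [abs_sub_comm q r] at h2
    exact ⟨by linarith, h1⟩
  filter_upwards [ae_hasDerivAt_of_eq_integral hT.le hp' hp,
    ae_hasDerivAt_of_eq_integral hT.le hG'int hGrep,
    ae_hasDerivAt_of_eq_integral hT.le hV'int hVrep,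
    ae_hasDerivAt_of_eq_integral hT.le hD'int hDrep,
    ae_restrict_mem measurableSet_Ioo] with t hpt hGt hVt hDt htT
  have ht : t ∈ Icc 0 T := Ioo_subset_Icc_self htT
  have hright : ∀ᶠ s in nhdsWithin t (Ioi t), s ∈ Ioo t T := Ioo_mem_nhdsGT htT.2
  -- A linear bound on the increments of an affine-weighted integral bounds the derivatives.
  have hderiv : ∀ α β γ κ : ℝ, (∀ᶠ s in nhdsWithin t (Ioi t),
      ∫ r in Ioi (0:ℝ), ∫ v in ξ r t..ξ r s, (α + β * v + γ * r) * ρ r v ≤ κ * (s - t)) →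
      α * G' t + β * V' t + γ * D' t ≤ κ := fun α β γ κ hle => by
    have hd := (((hGt.const_mul α).add (hVt.const_mul β)).add (hDt.const_mul γ)).sub
      ((hasDerivAt_id t).const_mul κ)
    have := hd.nonpos_of_eventually_le (by
      filter_upwards [hle, hright] with s hs hsT
      have hsT' : s ∈ Icc 0 T := ⟨ht.1.trans hsT.1.le, hsT.2.le⟩
      rw [← integral_affine_sub_integral_affine hρmeas hρbd hρs α β γ (hξcont t ht)
        (hξcont s hsT') (hξM t ht) (hξM s hsT'),
        ← affine_combination_eq_integral hρmeas hρbd hρs α β γ (hξcont t ht) (hξM t ht),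
        ← affine_combination_eq_integral hρmeas hρbd hρs α β γ (hξcont s hsT') (hξM s hsT')]
        at hs
      simp only [Pi.add_apply, Pi.sub_apply, id_eq]
      linarith)
    linarith
  have hosc : ∀ η > 0, ∀ᶠ s in nhdsWithin t (Ioi t), ∀ τ ∈ Icc t s, |p τ - p t| ≤ η :=
    fun η hη => eventually_forall_Icc_of_eventually (by simpa using hη.le) <| by
      filter_upwards [nhdsWithin_le_nhds (Metric.continuousAt_iff'.1 hpt.continuousAt η hη)]
        with s hs
      exact hs.le
  rcases lt_trichotomy (p' t) 0 with hneg | hzero | hpos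
  · have hmono : ∀ᶠ s in nhdsWithin t (Ioi t), ∀ τ ∈ Icc t s, (-p) t ≤ (-p) τ :=
      eventually_forall_Icc_of_eventually le_rfl
        (hpt.neg.eventually_le_of_pos (neg_pos.2 hneg))
    have hweight : ∀ α β γ : ℝ, ∀ η > 0,
        (∀ r > 0, ∀ v, |p t - v + r| ≤ η → 0 ≤ α + β * v + γ * r) →
        α * G' t + β * V' t + γ * D' t ≤ 0 := fun α β γ η hη hw => by
      refine hderiv α β γ 0 ?_
      filter_upwards [hmono, hosc η hη, hright] with s hs hsη hsT
      rw [zero_mul]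
      refine setIntegral_nonpos measurableSet_Ioi fun r hr => ?_
      have hplay := (hξ r hr).neg hr
      have hle : ξ r s ≤ ξ r t :=
        neg_le_neg_iff.1 (hplay.le_of_input_ge hr ht.1 hsT.1.le hsT.2.le hs)
      rw [intervalIntegral.integral_symm, neg_nonpos, intervalIntegral.integral_of_le hle,
        ← integral_Ico_eq_integral_Ioc]
      refine setIntegral_nonneg measurableSet_Ico fun v hv => ?_
      refine mul_nonneg (hw r hr v ?_) (hρbd r v).1
      have := hplay.abs_input_sub_sub_le hr ht.1 hsT.1.le hsT.2.le (ε := η) (v := -v)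
        (fun τ hτ => by
          simp only [Pi.neg_apply]
          rw [neg_sub_neg, abs_sub_comm]
          exact hsη τ hτ)
        ⟨neg_lt_neg hv.2, neg_le_neg hv.1⟩
      rw [← abs_neg]
      convert this using 2
      simp only [Pi.neg_apply]
      ring
    have hD : D' t ≤ 0 := by
      simpa using hweight 0 0 1 1 one_pos fun r hr v _ => by linarith
    have h1 : G' t * p t - V' t + D' t ≤ 0 :=
      nonpos_of_forall_pos_le_mul (b := -G' t) fun η hη => by
        have := hweight (p t + η) (-1) 1 η hη fun r _ v hv => by linarith [(abs_le.1 hv).1]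
        linarith
    have h2 : -(G' t * p t - V' t + D' t) ≤ 0 :=
      nonpos_of_forall_pos_le_mul (b := -G' t) fun η hη => by
        have := hweight (-p t + η) 1 (-1) η hη fun r _ v hv => by linarith [(abs_le.1 hv).2]
        linarith
    rw [abs_of_nonpos hD]
    linarith
  · rw [hzero] at hpt
    have hnull : ∀ α β γ : ℝ, α * G' t + β * V' t + γ * D' t ≤ 0 := fun α β γ => by
      refine nonpos_of_forall_pos_le_mul
        (b := (|α| + |β| * M + |γ| * M) * ∫ r in Ioi (0:ℝ), ρs r) fun η hη => ?_
      refine hderiv α β γ _ ?_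
      filter_upwards [eventually_forall_Icc_of_eventually (by simp)
        (hpt.eventually_abs_sub_le_of_eq_zero hη), hright] with s hs hsT
      have hsT' : s ∈ Icc 0 T := ⟨ht.1.trans hsT.1.le, hsT.2.le⟩
      refine (le_abs_self _).trans ((abs_integral_integral_affine_le hρbd hρs α β γ hM0
        (hξM t ht) (hξM s hsT') (ε := η * (s - t)) fun r hr => ?_).trans_eq (by ring))
      refine (hξ r hr).abs_sub_le hr ht.1 hsT.1.le hsT.2.le fun τ hτ => (hs τ hτ).trans ?_
      gcongr
      exact hτ.2
    have hG0 : G' t = 0 := by linarith [hnull 1 0 0, hnull (-1) 0 0]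
    have hV0 : V' t = 0 := by linarith [hnull 0 1 0, hnull 0 (-1) 0]
    have hD0 : D' t = 0 := by linarith [hnull 0 0 1, hnull 0 0 (-1)]
    simp [hG0, hV0, hD0]
  · have hmono : ∀ᶠ s in nhdsWithin t (Ioi t), ∀ τ ∈ Icc t s, p t ≤ p τ :=
      eventually_forall_Icc_of_eventually le_rfl (hpt.eventually_le_of_pos hpos)
    have hweight : ∀ α β γ : ℝ, ∀ η > 0,
        (∀ r > 0, ∀ v, |p t - v - r| ≤ η → α + β * v + γ * r ≤ 0) →
        α * G' t + β * V' t + γ * D' t ≤ 0 := fun α β γ η hη hw => by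
      refine hderiv α β γ 0 ?_
      filter_upwards [hmono, hosc η hη, hright] with s hs hsη hsT
      rw [zero_mul]
      refine setIntegral_nonpos measurableSet_Ioi fun r hr => ?_
      rw [intervalIntegral.integral_of_le
        ((hξ r hr).le_of_input_ge hr ht.1 hsT.1.le hsT.2.le hs)]
      refine setIntegral_nonpos measurableSet_Ioc fun v hv => ?_
      exact mul_nonpos_of_nonpos_of_nonneg (hw r hr v
        ((hξ r hr).abs_input_sub_sub_le hr ht.1 hsT.1.le hsT.2.le hsη hv)) (hρbd r v).1
    have hD : 0 ≤ D' t := by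
      simpa using hweight 0 0 (-1) 1 one_pos fun r hr v _ => by linarith
    have h1 : G' t * p t - V' t - D' t ≤ 0 :=
      nonpos_of_forall_pos_le_mul (b := G' t) fun η hη => by
        have := hweight (p t - η) (-1) (-1) η hη fun r _ v hv => by linarith [(abs_le.1 hv).2]
        linarith
    have h2 : -(G' t * p t - V' t - D' t) ≤ 0 :=
      nonpos_of_forall_pos_le_mul (b := G' t) fun η hη => by
        have := hweight (-p t - η) 1 1 η hη fun r _ v hv => by linarith [(abs_le.1 hv).1]
        linarith
    rw [abs_of_nonneg hD]
    linarith
end
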